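/- Fix a transportation cost t > 0 and let f : [0,1] → ℝ be a continuous, strictly positive density. For p ∈ [0,t] let μ(p) = 1/2 − p/(2t) and define firm B's profit Π_B(p) = ∫_{μ(p)}^{1} (p + t(2θ − 1)) f(θ) dθ. Then Π_B is strictly increasing on [0,t]: for all 0 ≤ p < p' ≤ t, Π_B(p) < Π_B(p'). -/

import Mathlib

open MeasureTheory intervalIntegral

/-!
The price `p + t (2θ - 1)` equals `2 t (θ - μ p)`, so firm B's profit is `2 t` times the stop-loss
transform `c ↦ ∫ θ in c..1, (θ - c) f θ` evaluated at the marginal consumer `μ p`. Lowering `c`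
raises the integrand and enlarges the domain of integration by an interval on which the integrand is
positive, so the transform is strictly decreasing; and `μ` is strictly decreasing in `p`.
-/

section StopLoss

open Set

variable {f : ℝ → ℝ} {a b : ℝ}

/-- The stop-loss transform `∫ x in c..b, (x - c) f x` at retention level `c` of a density `f`
whose support ends at `b`; for `c ≤ b` it integrates `max (x - c) 0 * f x` over `(-∞, b]`. -/
noncomputable def stopLoss (f : ℝ → ℝ) (b c : ℝ) : ℝ :=
  ∫ x in c..b, (x - c) * f x

theorem intervalIntegrable_sub_const_mul (hf : IntervalIntegrable f volume a b) (c : ℝ) :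
    IntervalIntegrable (fun x => (x - c) * f x) volume a b :=
  hf.continuousOn_mul (by fun_prop)

theorem integral_sub_const_mul_pos (hab : a < b) (hf : IntervalIntegrable f volume a b)
    (hpos : ∀ x ∈ Ioo a b, 0 < f x) : 0 < ∫ x in a..b, (x - a) * f x :=
  intervalIntegral_pos_of_pos_on (intervalIntegrable_sub_const_mul hf a)
    (fun x hx => mul_pos (sub_pos.2 hx.1) (hpos x hx)) hab

theorem antitone_integral_sub_const_mul (hab : a ≤ b) (hf : IntervalIntegrable f volume a b)
    (hnonneg : ∀ x ∈ Ioo a b, 0 ≤ f x) : Antitone fun c => ∫ x in a..b, (x - c) * f x :=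
  fun c d hcd => integral_mono_on_of_le_Ioo hab
    (intervalIntegrable_sub_const_mul hf d) (intervalIntegrable_sub_const_mul hf c)
    fun x hx => mul_le_mul_of_nonneg_right (sub_le_sub_left hcd x) (hnonneg x hx)

theorem strictAntiOn_stopLoss (hf : IntervalIntegrable f volume a b)
    (hpos : ∀ x ∈ Ioo a b, 0 < f x) : StrictAntiOn (stopLoss f b) (Icc a b) := by
  intro c hc d hd hcd
  have hf_cd : IntervalIntegrable f volume c d :=
    hf.mono_set (uIcc_subset_uIcc (Icc_subset_uIcc hc) (Icc_subset_uIcc hd))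
  have hf_db : IntervalIntegrable f volume d b :=
    hf.mono_set (uIcc_subset_uIcc_right (Icc_subset_uIcc hd))
  calc stopLoss f b d
      ≤ ∫ x in d..b, (x - c) * f x :=
        antitone_integral_sub_const_mul hd.2 hf_db
          (fun x hx => (hpos x (Ioo_subset_Ioo_left hd.1 hx)).le) hcd.le
    _ < (∫ x in c..d, (x - c) * f x) + ∫ x in d..b, (x - c) * f x :=
        lt_add_of_pos_left _ <| integral_sub_const_mul_pos hcd hf_cd
          fun x hx => hpos x (Ioo_subset_Ioo hc.1 hd.2 hx)
    _ = stopLoss f b c :=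
        integral_add_adjacent_intervals (intervalIntegrable_sub_const_mul hf_cd c)
          (intervalIntegrable_sub_const_mul hf_db c)

end StopLoss

namespace Hotelling

open Set

variable {t : ℝ}

/-- The location `μ p` of the consumer to whom firm B's price `p + t (2θ - 1)` is zero when firm A
posts the uniform price `p`; firm B serves the consumers to its right. -/
noncomputable def marginalConsumer (t p : ℝ) : ℝ :=
  1 / 2 - p / (2 * t)

/-- Firm B's profit `Π_B p` against firm A's uniform price `p`, for transportation cost `t` and
consumer density `f`. -/
noncomputable def personalizedProfit (t : ℝ) (f : ℝ → ℝ) (p : ℝ) : ℝ :=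
  ∫ θ in (marginalConsumer t p)..1, (p + t * (2 * θ - 1)) * f θ

theorem price_eq_mul_sub_marginalConsumer (ht : t ≠ 0) (p θ : ℝ) :
    p + t * (2 * θ - 1) = 2 * t * (θ - marginalConsumer t p) := by
  unfold marginalConsumer
  field_simp
  ring

theorem personalizedProfit_eq_mul_stopLoss (ht : t ≠ 0) (f : ℝ → ℝ) (p : ℝ) :
    personalizedProfit t f p = 2 * t * stopLoss f 1 (marginalConsumer t p) := by
  simp only [personalizedProfit, stopLoss, price_eq_mul_sub_marginalConsumer ht, mul_assoc,
    intervalIntegral.integral_const_mul]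

theorem strictAnti_marginalConsumer (ht : 0 < t) : StrictAnti (marginalConsumer t) :=
  fun _ _ hpq => sub_lt_sub_left (div_lt_div_of_pos_right hpq (by positivity)) _

theorem mapsTo_marginalConsumer (ht : 0 < t) :
    MapsTo (marginalConsumer t) (Icc (-t) t) (Icc 0 1) := by
  have left_end : marginalConsumer t t = 0 := by
    unfold marginalConsumer
    field_simp
    norm_num
  have right_end : marginalConsumer t (-t) = 1 := by
    unfold marginalConsumer
    field_simp
    norm_num
  simpa only [left_end, right_end] using
    (strictAnti_marginalConsumer ht).antitone.mapsTo_Icc (a := -t) (b := t)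

end Hotelling

open Hotelling in
theorem stmt_1_general {t : ℝ} (ht : 0 < t) {f : ℝ → ℝ}
    (hf : IntervalIntegrable f volume 0 1) (hf_pos : ∀ θ ∈ Set.Ioo (0 : ℝ) 1, 0 < f θ) :
    StrictMonoOn (personalizedProfit t f) (Set.Icc (-t) t) := by
  have stopLoss_mono : StrictMonoOn (stopLoss f 1 ∘ marginalConsumer t) (Set.Icc (-t) t) :=
    (strictAntiOn_stopLoss hf hf_pos).comp
      ((strictAnti_marginalConsumer ht).strictAntiOn _) (mapsTo_marginalConsumer ht)
  intro p hp q hq hpq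
  simp only [personalizedProfit_eq_mul_stopLoss ht.ne']
  exact mul_lt_mul_of_pos_left (stopLoss_mono hp hq hpq) (by positivity)

/-- Firm B's equilibrium profit `Π_B(p) = ∫_{μ(p)}^1 (p + t(2θ-1)) f(θ) dθ`
is strictly increasing in firm A's uniform price `p` on `[0, t]`, where
`μ(p) = 1/2 - p/(2t)` and `f` is a continuous strictly positive density on `[0,1]`. -/
theorem stmt_1 (t : ℝ) (ht : 0 < t) (f : ℝ → ℝ)
    (hf_cont : ContinuousOn f (Set.Icc 0 1))
    (hf_pos : ∀ θ ∈ Set.Icc (0 : ℝ) 1, 0 < f θ)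
    (μ : ℝ → ℝ) (hμ : ∀ p, μ p = 1 / 2 - p / (2 * t))
    (ProfitB : ℝ → ℝ)
    (hProfitB : ∀ p, ProfitB p = ∫ θ in (μ p)..1, (p + t * (2 * θ - 1)) * f θ) :
    ∀ p p' : ℝ, 0 ≤ p → p < p' → p' ≤ t → ProfitB p < ProfitB p' := by
  obtain rfl : μ = Hotelling.marginalConsumer t := funext hμ
  obtain rfl : ProfitB = Hotelling.personalizedProfit t f := funext hProfitB
  intro p p' hp hpp' hp't
  exact stmt_1_general ht (hf_cont.intervalIntegrable_of_Icc zero_le_one)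
    (fun θ hθ => hf_pos θ (Set.Ioo_subset_Icc_self hθ))
    ⟨by linarith, by linarith⟩ ⟨by linarith, hp't⟩ hpp'
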